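/- Consider the modified normal-means procedure of the context, which selects μ̃ = μ_ĩ with ĩ minimizing M̃_i := max_{ψ∈Ψ} |Δ_i(ψ)|/|ψ|_q (no knowledge of ε or Σ is needed). If Ψ is a (γ,p)-good set of probe vectors, then E|μ̃ − μ|_p ≤ (2·max_{ψ∈Ψ*} |ψ|_q + 1)·min_{i∈I_N} |μ_i − μ|_p + 2κε·(max_{ψ∈Ψ*} |ψ|_q)·(max_{ψ∈Ψ} |ψ|_Σ/|ψ|_q) + γ + 2Lδ. -/

import Mathlib

open MeasureTheory Matrix
open scoped ENNReal

/-- The `ℓ_r` norm of a vector in `ℝ^n`, for `r ∈ [1,∞]`. -/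
noncomputable def lnorm {n : ℕ} (r : ℝ≥0∞) (v : Fin n → ℝ) : ℝ :=
  if r = ⊤ then ⨆ k, |v k| else (∑ k, |v k| ^ r.toReal) ^ (1 / r.toReal)

/-- The seminorm `|ψ|_Σ = √(ψᵀ Σ ψ)` induced by a positive semidefinite matrix `Σ`. -/
noncomputable def signorm {n : ℕ} (Sig : Matrix (Fin n) (Fin n) ℝ) (v : Fin n → ℝ) : ℝ :=
  Real.sqrt (v ⬝ᵥ Sig.mulVec v)

/-!
A probe `φ` with `|φ v| ≤ b ν(v)` sees at most `ν(v)` after division by `b`, so the best candidate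
`c₀` has misfit at most `ν(c₀ - x) + η` once the normalised noise is at most `η`. The selected
candidate `c` has no larger misfit, so by the triangle inequality every probe `φ` gives
`φ(c₀ - c) ≤ 2b(ν(c₀ - x) + η)`, and the probe designated for the pair `(c₀, c)` recovers
`ν(c₀ - c)` up to `γ`. On the event of large noise the risk is bounded by `2L`. For the `ℓ_p` norm
the bound on the probes is Hölder's inequality.
-/

section LNorm

variable {n : ℕ} (r : ℝ≥0∞) [hr : Fact (1 ≤ r)]

theorem lnorm_eq_norm_toLp (v : Fin n → ℝ) : lnorm r v = ‖WithLp.toLp r v‖ := by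
  unfold lnorm
  split_ifs with h
  · subst h
    simp only [PiLp.norm_eq_ciSup, Real.norm_eq_abs]
  · simp only [PiLp.norm_eq_sum (ENNReal.toReal_pos (zero_lt_one.trans_le hr.out).ne' h),
      Real.norm_eq_abs]

theorem lnorm_pos {v : Fin n → ℝ} (hv : v ≠ 0) : 0 < lnorm r v := by
  rw [lnorm_eq_norm_toLp, norm_pos_iff]
  exact (WithLp.toLp_eq_zero r).not.2 hv

/-- The `ℓ_r` norm as a seminorm on the plain function space `Fin n → ℝ`, whose own norm instance
is the sup norm. -/
noncomputable def lnormSeminorm : Seminorm ℝ (Fin n → ℝ) :=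
  Seminorm.of (lnorm r)
    (fun v w => by simpa only [lnorm_eq_norm_toLp, WithLp.toLp_add] using norm_add_le _ _)
    (fun c v => by simp only [lnorm_eq_norm_toLp, WithLp.toLp_smul, norm_smul])

theorem lnormSeminorm_apply (v : Fin n → ℝ) : lnormSeminorm r v = lnorm r v := rfl

end LNorm

theorem abs_dotProduct_le_lnorm_mul_lnorm {n : ℕ} (p q : ℝ≥0∞) [ENNReal.HolderConjugate p q]
    (a b : Fin n → ℝ) : |a ⬝ᵥ b| ≤ lnorm p a * lnorm q b := by
  have : Fact (1 ≤ p) := ⟨ENNReal.HolderConjugate.one_le p q⟩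
  have : Fact (1 ≤ q) := ⟨ENNReal.HolderConjugate.one_le q p⟩
  have hmul : ∀ _ : Fin n, ‖ContinuousLinearMap.mul ℝ ℝ‖ ≤ (1 : NNReal) := fun _ => by simp
  have hpairing :=
    (lp.dualPairing p q (fun _ => ContinuousLinearMap.mul ℝ ℝ) hmul).le_of_opNorm₂_le_of_le
      (lp.norm_dualPairing _ _)
      (equiv_lpPiLp_norm (Equiv.lpPiLp.symm (WithLp.toLp p a))).ge
      (equiv_lpPiLp_norm (Equiv.lpPiLp.symm (WithLp.toLp q b))).ge
  rw [lp.dualPairing_apply] at hpairing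
  simpa [← lnorm_eq_norm_toLp, tsum_fintype, dotProduct, coe_equiv_lpPiLp_symm] using hpairing

theorem le_iSup_div_mul_iSup_div_mul {K : Type*} [Finite K] {a s b : K → ℝ}
    (ha : ∀ k, 0 ≤ a k) (hs : ∀ k, 0 < s k) (hb : ∀ k, 0 < b k) (k : K) :
    a k ≤ (⨆ l, a l / s l) * (⨆ l, s l / b l) * b k := by
  have hfactor : a k = a k / s k * (s k / b k) * b k := by
    rw [div_mul_div_cancel₀ (hs k).ne', div_mul_cancel₀ _ (hb k).ne']
  calc a k = a k / s k * (s k / b k) * b k := hfactor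
    _ ≤ (⨆ l, a l / s l) * (⨆ l, s l / b l) * b k := by
        have hb' := (hb k).le
        have hsb := div_nonneg (hs k).le hb'
        have ha' : 0 ≤ ⨆ l, a l / s l := Real.iSup_nonneg fun l => div_nonneg (ha l) (hs l).le
        gcongr
        · exact Finite.le_ciSup (fun l => a l / s l) k
        · exact Finite.le_ciSup (fun l => s l / b l) k

theorem integral_le_add_mul_measureReal {Ω : Type*} [MeasurableSpace Ω] {P : Measure Ω}
    [IsProbabilityMeasure P] {f : Ω → ℝ} (hf : Integrable f P) {s : Set Ω} {B C : ℝ}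
    (hC : 0 ≤ C) (hfs : ∀ ω ∈ s, f ω ≤ B + C) (hfsc : ∀ ω ∉ s, f ω ≤ B) :
    ∫ ω, f ω ∂P ≤ B + C * P.real s := by
  -- `s` may fail to be measurable, so the indicator is taken of a measurable hull.
  let t := toMeasurable P s
  have ht : MeasurableSet t := measurableSet_toMeasurable P s
  have hind : Integrable (t.indicator fun _ => C) P := (integrable_const C).indicator ht
  have hle (ω : Ω) : f ω ≤ B + t.indicator (fun _ => C) ω := by
    by_cases hω : ω ∈ s
    · rw [Set.indicator_of_mem (subset_toMeasurable P s hω)]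
      exact hfs ω hω
    · linarith [hfsc ω hω, t.indicator_nonneg (fun _ _ => hC) ω]
  calc ∫ ω, f ω ∂P
      ≤ ∫ ω, (B + t.indicator (fun _ => C) ω) ∂P :=
        integral_mono hf ((integrable_const B).add hind) hle
    _ = B + C * P.real s := by
        rw [integral_add (integrable_const B) hind, integral_indicator_const C ht, integral_const,
          probReal_univ, one_smul, smul_eq_mul, mul_comm, measureReal_def, measureReal_def,
          measure_toMeasurable]

section Probes

variable {E K : Type*} [AddCommGroup E] [Module ℝ E]

/-- The largest response of the probes `φ k` to `v`, each normalised by its weight `b k`. Applied to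
the difference of the observation and a candidate it is the selection criterion `M̃` of the
procedure. -/
noncomputable def probeMisfit (φ : K → Module.Dual ℝ E) (b : K → ℝ) (v : E) : ℝ :=
  ⨆ k, |φ k v| / b k

variable {ν : Seminorm ℝ E} {φ : K → Module.Dual ℝ E} {b : K → ℝ}

theorem abs_apply_le_mul_probeMisfit (hb : ∀ k, 0 < b k) (hφ : ∀ k v, |φ k v| ≤ b k * ν v)
    (k : K) (v : E) : |φ k v| ≤ b k * probeMisfit φ b v := by
  have hbdd : BddAbove (Set.range fun l => |φ l v| / b l) :=
    ⟨ν v, Set.forall_mem_range.2 fun l => (div_le_iff₀' (hb l)).2 (hφ l v)⟩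
  exact (div_le_iff₀' (hb k)).1 (le_ciSup hbdd k)

theorem probeMisfit_add_sub_le (hb : ∀ k, 0 < b k) (hφ : ∀ k v, |φ k v| ≤ b k * ν v)
    {x u c : E} {η : ℝ} (hη : 0 ≤ η) (hu : ∀ k, |φ k u| ≤ η * b k) :
    probeMisfit φ b (x + u - c) ≤ ν (c - x) + η := by
  refine Real.iSup_le (fun k => (div_le_iff₀ (hb k)).2 ?_) (add_nonneg (apply_nonneg ν _) hη)
  calc |φ k (x + u - c)| = |φ k (x - c) + φ k u| := by rw [← map_add, sub_add_eq_add_sub]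
    _ ≤ |φ k (x - c)| + |φ k u| := abs_add_le _ _
    _ ≤ b k * ν (x - c) + η * b k := add_le_add (hφ k _) (hu k)
    _ = (ν (c - x) + η) * b k := by rw [map_sub_rev ν x c]; ring

theorem apply_sub_le_of_probeMisfit_le (hb : ∀ k, 0 < b k) (hφ : ∀ k v, |φ k v| ≤ b k * ν v)
    {y c c₀ : E} (hc : probeMisfit φ b (y - c) ≤ probeMisfit φ b (y - c₀)) (k : K) :
    φ k (c₀ - c) ≤ 2 * b k * probeMisfit φ b (y - c₀) := by
  calc φ k (c₀ - c) = φ k (y - c) - φ k (y - c₀) := by rw [← map_sub, sub_sub_sub_cancel_left]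
    _ ≤ |φ k (y - c)| + |φ k (y - c₀)| := (le_abs_self _).trans (abs_sub _ _)
    _ ≤ b k * probeMisfit φ b (y - c) + b k * probeMisfit φ b (y - c₀) :=
        add_le_add (abs_apply_le_mul_probeMisfit hb hφ k _)
          (abs_apply_le_mul_probeMisfit hb hφ k _)
    _ ≤ 2 * b k * probeMisfit φ b (y - c₀) := by
        linarith [mul_le_mul_of_nonneg_left hc (hb k).le]

theorem measureReal_exists_lt_abs_apply_smul_le [Finite K] {s : K → ℝ} (hs : ∀ k, 0 < s k)
    (hb : ∀ k, 0 < b k) {Ω : Type*} [MeasurableSpace Ω] {P : Measure Ω} [IsFiniteMeasure P]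
    (w : Ω → E) {ε : ℝ} (hε : 0 ≤ ε) (κ : ℝ) :
    P.real {ω | ∃ k, κ * ε * (⨆ l, s l / b l) * b k < |φ k (ε • w ω)|} ≤
      P.real {ω | κ ≤ ⨆ k, |φ k (w ω)| / s k} := by
  refine measureReal_mono fun ω ⟨k, hk⟩ => ?_
  contrapose! hk
  have hκ : ⨆ l, |φ l (w ω)| / s l ≤ κ := (not_le.1 hk).le
  have hS : 0 ≤ ⨆ l, s l / b l := Real.iSup_nonneg fun l => div_nonneg (hs l).le (hb l).le
  calc |φ k (ε • w ω)| = ε * |φ k (w ω)| := by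
        rw [map_smul, smul_eq_mul, abs_mul, abs_of_nonneg hε]
    _ ≤ ε * ((⨆ l, |φ l (w ω)| / s l) * (⨆ l, s l / b l) * b k) := by
        gcongr
        exact le_iSup_div_mul_iSup_div_mul (fun l => abs_nonneg (φ l (w ω))) hs hb k
    _ ≤ ε * (κ * (⨆ l, s l / b l) * b k) := by
        have := (hb k).le
        gcongr
    _ = κ * ε * (⨆ l, s l / b l) * b k := by ring

variable {ι : Type*} {m : ι → E} {x : E} {i₀ : ι} {rep : ι → K} {γ A η : ℝ}

theorem seminorm_sub_le_of_probeMisfit_le (hb : ∀ k, 0 < b k) (hφ : ∀ k v, |φ k v| ≤ b k * ν v)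
    (hγ : 0 ≤ γ) (hrep : ∀ j ≠ i₀, ν (m i₀ - m j) - φ (rep j) (m i₀ - m j) ≤ γ)
    (hA₀ : 0 ≤ A) (hA : ∀ j ≠ i₀, b (rep j) ≤ A) (hη : 0 ≤ η)
    {u : E} (hu : ∀ k, |φ k u| ≤ η * b k) {i : ι}
    (hi : probeMisfit φ b (x + u - m i) ≤ probeMisfit φ b (x + u - m i₀)) :
    ν (m i - x) ≤ (2 * A + 1) * ν (m i₀ - x) + 2 * A * η + γ := by
  have hmisfit : probeMisfit φ b (x + u - m i₀) ≤ ν (m i₀ - x) + η :=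
    probeMisfit_add_sub_le hb hφ hη hu
  have hdist : ν (m i₀ - m i) ≤ 2 * A * (ν (m i₀ - x) + η) + γ := by
    rcases eq_or_ne i i₀ with rfl | hne
    · rw [sub_self, map_zero]
      positivity
    calc ν (m i₀ - m i) ≤ φ (rep i) (m i₀ - m i) + γ :=
          sub_le_iff_le_add'.1 (hrep i hne)
      _ ≤ 2 * b (rep i) * probeMisfit φ b (x + u - m i₀) + γ := by
          gcongr
          exact apply_sub_le_of_probeMisfit_le hb hφ hi _
      _ ≤ 2 * A * (ν (m i₀ - x) + η) + γ := by
          grw [hmisfit, hA i hne]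
          linarith [hb (rep i)]
  calc ν (m i - x) ≤ ν (m i₀ - x) + ν (m i₀ - m i) := by
        simpa only [sub_sub_sub_cancel_left] using map_sub_le_add ν (m i₀ - x) (m i₀ - m i)
    _ ≤ (2 * A + 1) * ν (m i₀ - x) + 2 * A * η + γ := by linarith

/-- In the setting of `stmt_16`, `b` is the dual norm `|ψ|_q`, `A` is its maximum over `Ψ*`, and the
noise level is `η = κ ε max_ψ |ψ|_Σ / |ψ|_q`. -/
theorem stmt_16_general (hb : ∀ k, 0 < b k) (hφ : ∀ k v, |φ k v| ≤ b k * ν v)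
    (hγ : 0 ≤ γ) (hrep : ∀ j ≠ i₀, ν (m i₀ - m j) - φ (rep j) (m i₀ - m j) ≤ γ)
    (hA₀ : 0 ≤ A) (hA : ∀ j ≠ i₀, b (rep j) ≤ A)
    {L : ℝ} (hx : ν x ≤ L) (hm : ∀ i, ν (m i) ≤ L)
    {Ω : Type*} [MeasurableSpace Ω] {P : Measure Ω} [IsProbabilityMeasure P]
    {u : Ω → E} (hη : 0 ≤ η) {δ : ℝ}
    (hu : P.real {ω | ∃ k, η * b k < |φ k (u ω)|} ≤ δ)
    {i : Ω → ι} (hmeas : AEStronglyMeasurable (fun ω => ν (m (i ω) - x)) P)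
    (hi : ∀ ω, probeMisfit φ b (x + u ω - m (i ω)) ≤ probeMisfit φ b (x + u ω - m i₀)) :
    ∫ ω, ν (m (i ω) - x) ∂P ≤
      (2 * A + 1) * ν (m i₀ - x) + 2 * A * η + γ + 2 * L * δ := by
  have hL : 0 ≤ 2 * L := mul_nonneg two_pos.le ((apply_nonneg ν x).trans hx)
  have hrisk (ω : Ω) : ν (m (i ω) - x) ≤ 2 * L := by
    linarith [map_sub_le_add ν (m (i ω)) x, hm (i ω)]
  have hint : Integrable (fun ω => ν (m (i ω) - x)) P :=
    .of_bound hmeas (2 * L) <| .of_forall fun ω =>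
      (Real.norm_of_nonneg (apply_nonneg ν _)).trans_le (hrisk ω)
  have hB : 0 ≤ (2 * A + 1) * ν (m i₀ - x) + 2 * A * η + γ := by positivity
  have hquiet (ω : Ω) (hω : ω ∉ {ω | ∃ k, η * b k < |φ k (u ω)|}) :
      ν (m (i ω) - x) ≤ (2 * A + 1) * ν (m i₀ - x) + 2 * A * η + γ :=
    seminorm_sub_le_of_probeMisfit_le hb hφ hγ hrep hA₀ hA hη (by simpa using hω) (hi ω)
  exact (integral_le_add_mul_measureReal hint hL
    (fun ω _ => (hrisk ω).trans (le_add_of_nonneg_left hB)) hquiet).trans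
    (add_le_add_right (mul_le_mul_of_nonneg_left hu hL) _)

end Probes

/-- Theorem 7 of the paper: oracle inequality for the modified
normal-means aggregation procedure, which needs no knowledge of `ε` or `Σ`. -/
theorem stmt_16
    {n N : ℕ} (hn : 1 ≤ n) (hN : 2 ≤ N)
    (p q : ℝ≥0∞) (hp : 1 ≤ p) (hpq : 1 / p + 1 / q = 1)
    (γ : ℝ) (hγ : 0 ≤ γ)
    (mu : Fin n → ℝ) (Mu : Fin N → Fin n → ℝ)
    (hdist : ∀ i j, i ≠ j → Mu i ≠ Mu j)
    (L : ℝ) (hL : L = max (lnorm p mu) (⨆ i, lnorm p (Mu i)))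
    (Sig : Matrix (Fin n) (Fin n) ℝ) (hSig : Sig.PosSemidef)
    {K : Type} [Fintype K] [Nonempty K]
    (ψ : K → Fin n → ℝ) (hψ0 : ∀ k, ψ k ≠ 0)
    (hψSig : ∀ k, 0 < signorm Sig (ψ k))
    (rep : Fin N → Fin N → K)
    (hgood : ∀ i j, i ≠ j →
      |ψ (rep i j) ⬝ᵥ (Mu i - Mu j) - lnorm p (Mu i - Mu j)| ≤ γ)
    {Ω : Type} [MeasurableSpace Ω] (P : Measure Ω) [IsProbabilityMeasure P]
    (w : Ω → Fin n → ℝ) (hw : Measurable w)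
    (ε δ : ℝ) (hε : 0 < ε) (hδ0 : 0 < δ) (hδ1 : δ < 1)
    (κ : ℝ) (hκpos : 0 < κ)
    (hκ : (P {ω | κ ≤ ⨆ k, |ψ k ⬝ᵥ w ω| / signorm Sig (ψ k)}).toReal ≤ δ)
    (Mtil : Fin N → Ω → ℝ)
    (hM : ∀ i ω, Mtil i ω = ⨆ k, |ψ k ⬝ᵥ (mu + ε • w ω - Mu i)| / lnorm q (ψ k))
    (itil : Ω → Fin N) (hitilm : Measurable itil)
    (hmin : ∀ ω i, Mtil (itil ω) ω ≤ Mtil i ω)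
    (istar : Fin N)
    (histar : ∀ i, lnorm p (Mu istar - mu) ≤ lnorm p (Mu i - mu)) :
    ∫ ω, lnorm p (Mu (itil ω) - mu) ∂P ≤
      (2 * (⨆ j : {j : Fin N // j ≠ istar}, lnorm q (ψ (rep istar j.1))) + 1) *
          (⨅ i, lnorm p (Mu i - mu))
        + 2 * κ * ε * (⨆ j : {j : Fin N // j ≠ istar}, lnorm q (ψ (rep istar j.1))) *
            (⨆ k, signorm Sig (ψ k) / lnorm q (ψ k))
        + γ + 2 * L * δ := by
  have : Fact (1 ≤ p) := ⟨hp⟩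
  have : ENNReal.HolderConjugate p q := ENNReal.holderConjugate_iff.2 (by simpa using hpq)
  have : Fact (1 ≤ q) := ⟨ENNReal.HolderConjugate.one_le q p⟩
  have hb (k : K) : 0 < lnorm q (ψ k) := lnorm_pos q (hψ0 k)
  have hS : 0 ≤ ⨆ k, signorm Sig (ψ k) / lnorm q (ψ k) :=
    Real.iSup_nonneg fun k => div_nonneg (hψSig k).le (hb k).le
  have hinf : ⨅ i, lnorm p (Mu i - mu) = lnorm p (Mu istar - mu) :=
    IsLeast.csInf_eq ⟨⟨istar, rfl⟩, Set.forall_mem_range.2 histar⟩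
  have hMu : ∀ i, lnorm p (Mu i) ≤ ⨆ j, lnorm p (Mu j) := Finite.le_ciSup fun j => lnorm p (Mu j)
  have hrisk := stmt_16_general (ν := lnormSeminorm p) (φ := fun k => dotProductBilin ℝ ℝ (ψ k))
    (hb := hb) (hφ := fun k => abs_dotProduct_le_lnorm_mul_lnorm q p (ψ k)) (hγ := hγ)
    (hrep := fun j hj => (abs_sub_le_iff.1 (hgood istar j hj.symm)).2)
    (hA₀ := Real.iSup_nonneg fun _ => (hb _).le)
    (hA := fun j hj =>
      Finite.le_ciSup (fun j : {j // j ≠ istar} => lnorm q (ψ (rep istar j))) ⟨j, hj⟩)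
    (hx := le_max_left (lnorm p mu) _) (hm := fun i => (hMu i).trans (le_max_right _ _))
    (hη := by positivity)
    (hu := (measureReal_exists_lt_abs_apply_smul_le hψSig hb w hε.le κ).trans hκ)
    (hmeas := (measurable_of_finite fun i => lnorm p (Mu i - mu)).comp hitilm
      |>.aestronglyMeasurable)
    (hi := fun ω => by simpa only [hM] using! hmin ω istar)
  rw [hinf, hL]
  exact hrisk.trans_eq (by rw [lnormSeminorm_apply]; ring)
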